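/- Let f : ℝ^{n_x} → ℝ and g : ℝ^{n_x̄} → ℝ, and define the augmented Lagrangian L(x, x̄, z, y) = f(x) + g(x̄) + yᵀ(Ax + Bx̄ + z − b) + (ρ/2)‖Ax + Bx̄ + z − b‖² + λᵀz + (β/2)‖z‖². Fix x, x̄, z, y with λ + β·z + y = 0, let s = Ax + Bx̄ − b, set ρ = 2β with β > 0, and let z⁺ = −(ρ/(ρ+β))·(s + y/ρ) − (1/(ρ+β))·λ and y⁺ = y + ρ·(s + z⁺). Then L(x, x̄, z⁺, y⁺) − L(x, x̄, z, y) ≤ −(β/2)·‖z⁺ − z‖². -/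

import Mathlib

open RealInnerProductSpace

/-!
The z-update is the minimizer of a quadratic with Hessian `ρ + β`, so at fixed `y` it lowers the
augmented Lagrangian by exactly `((ρ + β) / 2) * ‖z⁺ - z‖ ^ 2`, and the y-update then raises it by
`ρ * ‖s + z⁺‖ ^ 2`. Stationarity of `z⁺` is again a dual-slack identity, `λ + βz⁺ + y⁺ = 0`;
subtracting the previous one gives `ρ(s + z⁺) = -β(z⁺ - z)`, so the rise is
`(β ^ 2 / ρ) * ‖z⁺ - z‖ ^ 2`.
-/

namespace SlackADMM

variable {E : Type*} [NormedAddCommGroup E] [InnerProductSpace ℝ E]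

/-- The part of the augmented Lagrangian that depends on the slack `z` and the dual `y`. The primal
variables are held fixed and enter only through `s = Ax + Bx̄ - b`. -/
noncomputable def slackLagrangian (ρ β : ℝ) (lam s z y : E) : ℝ :=
  ⟪y, s + z⟫ + (ρ / 2) * ‖s + z‖ ^ 2 + ⟪lam, z⟫ + (β / 2) * ‖z‖ ^ 2

/-- The closed-form z-update of the inner ADMM iteration, with `s = Ax + Bx̄ - b`. -/
noncomputable def slackUpdate (ρ β : ℝ) (lam s y : E) : E :=
  -((ρ / (ρ + β)) • (s + ρ⁻¹ • y)) - (ρ + β)⁻¹ • lam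

/-- The dual y-update of the inner ADMM iteration, with `s = Ax + Bx̄ - b`. -/
def dualUpdate (ρ : ℝ) (s z y : E) : E :=
  y + ρ • (s + z)

theorem slackLagrangian_add (ρ β : ℝ) (lam s z y d : E) :
    slackLagrangian ρ β lam s (z + d) y =
      slackLagrangian ρ β lam s z y + ⟪lam + β • z + dualUpdate ρ s z y, d⟫ +
        ((ρ + β) / 2) * ‖d‖ ^ 2 := by
  simp only [slackLagrangian, dualUpdate, ← add_assoc s z d, norm_add_sq_real, inner_add_left,
    inner_add_right, real_inner_smul_left]
  ring

theorem slackLagrangian_sub_of_stationary {ρ β : ℝ} {lam s z₀ y : E}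
    (h₀ : lam + β • z₀ + dualUpdate ρ s z₀ y = 0) (z : E) :
    slackLagrangian ρ β lam s z₀ y - slackLagrangian ρ β lam s z y =
      -((ρ + β) / 2) * ‖z₀ - z‖ ^ 2 := by
  have expansion := slackLagrangian_add ρ β lam s z₀ y (z - z₀)
  rw [add_sub_cancel, h₀, inner_zero_left, norm_sub_rev] at expansion
  linarith

theorem slackLagrangian_dualUpdate_sub (ρ β : ℝ) (lam s z y : E) :
    slackLagrangian ρ β lam s z (dualUpdate ρ s z y) - slackLagrangian ρ β lam s z y =
      ρ * ‖s + z‖ ^ 2 := by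
  have inner_dualUpdate : ⟪dualUpdate ρ s z y, s + z⟫ = ⟪y, s + z⟫ + ρ * ‖s + z‖ ^ 2 := by
    rw [dualUpdate, inner_add_left, real_inner_smul_left, real_inner_self_eq_norm_sq]
  rw [slackLagrangian, slackLagrangian, inner_dualUpdate]
  ring

theorem slackUpdate_stationary {ρ β : ℝ} (hρ : ρ ≠ 0) (hρβ : ρ + β ≠ 0) (lam s y : E) :
    lam + β • slackUpdate ρ β lam s y + dualUpdate ρ s (slackUpdate ρ β lam s y) y = 0 := by
  have smul_slackUpdate : (ρ + β) • slackUpdate ρ β lam s y = -(ρ • s + y) - lam := by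
    rw [slackUpdate, smul_sub, smul_neg, smul_smul, mul_div_cancel₀ _ hρβ, smul_add,
      smul_inv_smul₀ hρ, smul_inv_smul₀ hρβ]
  calc lam + β • slackUpdate ρ β lam s y + dualUpdate ρ s (slackUpdate ρ β lam s y) y
      = lam + (ρ + β) • slackUpdate ρ β lam s y + (ρ • s + y) := by rw [dualUpdate]; module
    _ = 0 := by rw [smul_slackUpdate]; abel

theorem smul_residual_eq_of_dual_slack {ρ β : ℝ} {lam s z z' y : E}
    (h : lam + β • z + y = 0) (h' : lam + β • z' + dualUpdate ρ s z' y = 0) :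
    ρ • (s + z') = -(β • (z' - z)) := by
  rw [dualUpdate] at h'
  linear_combination (norm := module) h' - h

theorem mul_norm_residual_sq_of_dual_slack {ρ β : ℝ} (hρ : ρ ≠ 0) {lam s z z' y : E}
    (h : lam + β • z + y = 0) (h' : lam + β • z' + dualUpdate ρ s z' y = 0) :
    ρ * ‖s + z'‖ ^ 2 = β ^ 2 / ρ * ‖z' - z‖ ^ 2 := by
  have norm_sq_eq : ρ ^ 2 * ‖s + z'‖ ^ 2 = β ^ 2 * ‖z' - z‖ ^ 2 := by
    have := congrArg (‖·‖ ^ 2) (smul_residual_eq_of_dual_slack h h')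
    simpa only [norm_neg, norm_smul, mul_pow, Real.norm_eq_abs, sq_abs] using this
  field_simp
  exact norm_sq_eq

theorem slackLagrangian_update_sub {ρ β : ℝ} (hρ : ρ ≠ 0) (hρβ : ρ + β ≠ 0) {lam s z y z' : E}
    (hdual : lam + β • z + y = 0) (hz' : z' = slackUpdate ρ β lam s y) :
    slackLagrangian ρ β lam s z' (dualUpdate ρ s z' y) - slackLagrangian ρ β lam s z y =
      (β ^ 2 / ρ - (ρ + β) / 2) * ‖z' - z‖ ^ 2 := by
  have stationary : lam + β • z' + dualUpdate ρ s z' y = 0 :=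
    hz' ▸ slackUpdate_stationary hρ hρβ lam s y
  have z_step := slackLagrangian_sub_of_stationary stationary z
  have y_step := slackLagrangian_dualUpdate_sub ρ β lam s z' y
  rw [mul_norm_residual_sq_of_dual_slack hρ hdual stationary] at y_step
  linear_combination z_step + y_step

end SlackADMM

open SlackADMM

theorem z_y_update_decrease_rho_eq_two_beta_general {X Xb E : Type*}
    [NormedAddCommGroup E] [InnerProductSpace ℝ E]
    (f : X → ℝ) (g : Xb → ℝ) (A : X → E) (B : Xb → E) (b lam : E)
    (ρ β : ℝ) (hρ : 0 < ρ) (hρβ : 2 * β ^ 2 ≤ ρ ^ 2)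
    (L : X → Xb → E → E → ℝ)
    (hL : ∀ x xbar z y, L x xbar z y =
      f x + g xbar + ⟪y, A x + B xbar + z - b⟫ +
        (ρ / 2) * ‖A x + B xbar + z - b‖ ^ 2 + ⟪lam, z⟫ + (β / 2) * ‖z‖ ^ 2)
    (x : X) (xbar : Xb) (z y : E) (hdual : lam + β • z + y = 0)
    (s : E) (hs : s = A x + B xbar - b)
    (zp : E) (hzp : zp = slackUpdate ρ β lam s y)
    (yp : E) (hyp : yp = dualUpdate ρ s zp y) :
    L x xbar zp yp - L x xbar z y ≤ -(β / 2) * ‖zp - z‖ ^ 2 := by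
  have L_eq (z y : E) : L x xbar z y = f x + g xbar + slackLagrangian ρ β lam s z y := by
    rw [hL, slackLagrangian, hs, add_sub_right_comm]
    ring
  have sum_pos : 0 < ρ + β := by nlinarith
  have coeff_le : β ^ 2 / ρ - (ρ + β) / 2 ≤ -(β / 2) := by
    have : β ^ 2 / ρ ≤ ρ / 2 := by rw [div_le_iff₀ hρ]; linarith
    linarith
  calc L x xbar zp yp - L x xbar z y
      = slackLagrangian ρ β lam s zp yp - slackLagrangian ρ β lam s z y := by
        rw [L_eq, L_eq, add_sub_add_left_eq_sub]
    _ = (β ^ 2 / ρ - (ρ + β) / 2) * ‖zp - z‖ ^ 2 :=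
        hyp ▸ slackLagrangian_update_sub hρ.ne' sum_pos.ne' hdual hzp
    _ ≤ -(β / 2) * ‖zp - z‖ ^ 2 := by gcongr

/-- Under the dual-slack identity `λ + βz + y = 0` and the algorithmic choice
`ρ = 2β`, the z- and y-updates of the inner ADMM iteration decrease the augmented
Lagrangian by at least `(β/2)‖z⁺ − z‖²`. -/
theorem z_y_update_decrease_rho_eq_two_beta {nx nxb m : ℕ}
    (f : EuclideanSpace ℝ (Fin nx) → ℝ) (g : EuclideanSpace ℝ (Fin nxb) → ℝ)
    (A : EuclideanSpace ℝ (Fin nx) →L[ℝ] EuclideanSpace ℝ (Fin m))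
    (B : EuclideanSpace ℝ (Fin nxb) →L[ℝ] EuclideanSpace ℝ (Fin m))
    (b : EuclideanSpace ℝ (Fin m)) (lam : EuclideanSpace ℝ (Fin m))
    (ρ β : ℝ) (hβ : 0 < β) (hρβ : ρ = 2 * β)
    (L : EuclideanSpace ℝ (Fin nx) → EuclideanSpace ℝ (Fin nxb) →
      EuclideanSpace ℝ (Fin m) → EuclideanSpace ℝ (Fin m) → ℝ)
    (hL : ∀ x xbar z y, L x xbar z y =
      f x + g xbar + ⟪y, A x + B xbar + z - b⟫ +
        (ρ / 2) * ‖A x + B xbar + z - b‖ ^ 2 + ⟪lam, z⟫ + (β / 2) * ‖z‖ ^ 2)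
    (x : EuclideanSpace ℝ (Fin nx)) (xbar : EuclideanSpace ℝ (Fin nxb))
    (z y : EuclideanSpace ℝ (Fin m))
    (hdual : lam + β • z + y = 0)
    (s : EuclideanSpace ℝ (Fin m)) (hs : s = A x + B xbar - b)
    (zp : EuclideanSpace ℝ (Fin m))
    (hzp : zp = -((ρ / (ρ + β)) • (s + ρ⁻¹ • y)) - (ρ + β)⁻¹ • lam)
    (yp : EuclideanSpace ℝ (Fin m))
    (hyp : yp = y + ρ • (s + zp)) :
    L x xbar zp yp - L x xbar z y ≤ -(β / 2) * ‖zp - z‖ ^ 2 := by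
  exact z_y_update_decrease_rho_eq_two_beta_general f g A B b lam ρ β (by linarith)
    (by rw [hρβ]; nlinarith) L hL x xbar z y hdual s hs zp hzp yp hyp
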